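/- Let Y be a nonempty finite type, let d₁, d₀ : Y → ℝ be probability mass functions on Y (nonnegative, each summing to 1), and let f, n : Y → ℝ be everywhere-positive probability mass functions on Y. Define the data joint μ on Bool × Y × Y by μ(true, y₁, y₂) = (1/2)·d₁(y₁)·d₀(y₂) and μ(false, y₁, y₂) = (1/2)·d₀(y₁)·d₁(y₂), and define the model posterior q(true | y₁, y₂) = f(y₁)·n(y₂) / (f(y₁)·n(y₂) + n(y₁)·f(y₂)) and q(false | y₁, y₂) = n(y₁)·f(y₂) / (f(y₁)·n(y₂) + n(y₁)·f(y₂)). Then ∑_{c ∈ Bool} ∑_{y₁, y₂ ∈ Y} μ(c, y₁, y₂) · log q(c | y₁, y₂) = ∑_{y⁺, y⁻ ∈ Y} d₁(y⁺)·d₀(y⁻) · log σ( log( f(y⁺)·n(y⁻) / (f(y⁻)·n(y⁺)) ) ), where σ(t) = 1/(1 + exp(−t)). (This is the expectation-level equivalence asserted in the paper's Theorem 1: under the constraints p^θ(y|x,c=0) = p^prior(y|x) and p^θ(c|x) = 1/2, the constrained MLE objective E[log p^θ(c | x, (y^c, y^{¬c}))] coincides with the DPO objective E[log σ(r^θ(y⁺,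 y⁻, x))].) -/

import Mathlib

/-- The logistic (sigmoid) function σ(t) = 1/(1 + exp(−t)). -/
noncomputable def logistic (t : ℝ) : ℝ := 1 / (1 + Real.exp (-t))

/-- Expectation-level equivalence asserted in the paper's Theorem 1: under the prior
constraint `p^θ(y|x,c=0) = p^prior(y|x)` and the balanced class prior, the constrained
MLE objective `E[log p^θ(c | x, (y^c, y^{¬c}))]` coincides with the DPO objective
`E[log σ(r^θ(y⁺, y⁻, x))]`. -/
theorem stmt_2 {Y : Type*} [Fintype Y] [Nonempty Y]
    (d₁ d₀ f n : Y → ℝ)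
    (hd₁_nonneg : ∀ y, 0 ≤ d₁ y) (hd₁_sum : ∑ y, d₁ y = 1)
    (hd₀_nonneg : ∀ y, 0 ≤ d₀ y) (hd₀_sum : ∑ y, d₀ y = 1)
    (hf_pos : ∀ y, 0 < f y) (hf_sum : ∑ y, f y = 1)
    (hn_pos : ∀ y, 0 < n y) (hn_sum : ∑ y, n y = 1)
    (μ : Bool → Y → Y → ℝ) (q : Bool → Y → Y → ℝ)
    (hμt : ∀ y₁ y₂, μ true y₁ y₂ = (1 / 2) * d₁ y₁ * d₀ y₂)
    (hμf : ∀ y₁ y₂, μ false y₁ y₂ = (1 / 2) * d₀ y₁ * d₁ y₂)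
    (hqt : ∀ y₁ y₂, q true y₁ y₂ = f y₁ * n y₂ / (f y₁ * n y₂ + n y₁ * f y₂))
    (hqf : ∀ y₁ y₂, q false y₁ y₂ = n y₁ * f y₂ / (f y₁ * n y₂ + n y₁ * f y₂)) :
    (∑ c : Bool, ∑ y₁ : Y, ∑ y₂ : Y, μ c y₁ y₂ * Real.log (q c y₁ y₂)) =
      ∑ yp : Y, ∑ ym : Y,
        d₁ yp * d₀ ym * Real.log (logistic (Real.log (f yp * n ym / (f ym * n yp)))) := by
  have key : ∀ a b, logistic (Real.log (f a * n b / (f b * n a))) =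
      f a * n b / (f a * n b + n a * f b) := by
    intro a b
    have h1 := hf_pos a
    have h2 := hf_pos b
    have h3 := hn_pos a
    have h4 := hn_pos b
    have h5 : 0 < f a * n b / (f b * n a) := by positivity
    unfold logistic
    rw [Real.exp_neg, Real.exp_log h5]
    field_simp
  rw [Fintype.sum_bool, Finset.sum_comm (f := fun y₁ y₂ => μ false y₁ y₂ * Real.log (q false y₁ y₂)),
    ← Finset.sum_add_distrib]
  refine Finset.sum_congr rfl fun a _ => ?_
  rw [← Finset.sum_add_distrib]
  refine Finset.sum_congr rfl fun b _ => ?_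
  rw [key, hμt, hμf, hqt, hqf]
  have e : n b * f a / (f b * n a + n b * f a) = f a * n b / (f a * n b + n a * f b) := by
    congr 1 <;> ring
  rw [e]
  ring
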